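/- Let m be a positive integer, n ≥ 1, c > 0, and 1 ≤ p ≤ ∞. Define G_t(x) = t^{-n/(2m)} exp( -c |x|^{2m/(2m-1)} / t^{1/(2m-1)} ) for t > 0, x ∈ ℝⁿ. Then there exists a constant C > 0, depending only on n, m, c and p, such that for every t > 0: Σ_{k∈ℤⁿ} ‖G_t‖_{L^p(C(k))} ≤ C ( 1 + t^{-(n/(2m))(1 - 1/p)} ). -/

import Mathlib

open Real MeasureTheory ENNReal

/-- The Gaussian-type profile `G_t(x) = t^{-n/(2m)} exp(-c |x|^{2m/(2m-1)} / t^{1/(2m-1)})`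
bounding the heat kernel of `(-Δ)^m`. -/
noncomputable def Gprof (n m : ℕ) (c : ℝ) (t : ℝ) (x : EuclideanSpace ℝ (Fin n)) : ℝ :=
  t ^ (-(n : ℝ) / (2 * (m : ℝ))) *
    Real.exp (-c * ‖x‖ ^ ((2 * (m : ℝ)) / (2 * (m : ℝ) - 1)) / t ^ (1 / (2 * (m : ℝ) - 1)))

/-- The unit cube `C(k)` in `ℝⁿ` centered at `k ∈ ℤⁿ`. -/
def unitCube (n : ℕ) (k : Fin n → ℤ) : Set (EuclideanSpace ℝ (Fin n)) :=
  {x | ∀ i, |x i - (k i : ℝ)| ≤ 1 / 2}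

/-!
`G_t` is the `L¹`-normalized dilation, to the length scale `s = t^{1/(2m)}`, of the fixed profile
`g(x) = exp(-c |x|^α)` with `α = 2m/(2m-1)`. Dilation preserves the norm of `ℓ¹(L¹) = L¹`, and
multiplies the norm of `ℓ¹(L^∞)` by at most `(1 + 2/s)^n`, because a cube of side `s` meets at most
`(s + 2)^n` unit cubes. Hölder's inequality, on each cube and then over the cubes, interpolates
these two bounds to the factor `(1 + 2/s)^{n(1-1/p)}` for `ℓ¹(L^p)`. The norm of `g` in `ℓ¹(L^∞)` is
finite since `g` decays faster than `(1 + |x|)^{-r}` with `r > n`, a weight which is integrable and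
varies by a bounded factor on each cube.
-/

section RealInequalities

lemma one_add_rpow_le {x a : ℝ} (hx : 0 ≤ x) (ha : 0 ≤ a) :
    (1 + x) ^ a ≤ 2 ^ a * (1 + x ^ a) := by
  have hmax : 1 + x ≤ 2 * max 1 x := by linarith [le_max_left 1 x, le_max_right 1 x]
  calc (1 + x) ^ a ≤ (2 * max 1 x) ^ a := by gcongr
    _ = 2 ^ a * max 1 x ^ a := mul_rpow zero_le_two (by positivity)
    _ ≤ 2 ^ a * (1 + x ^ a) := by
      gcongr
      rcases max_cases 1 x with ⟨h, -⟩ | ⟨h, -⟩ <;> rw [h]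
      · rw [Real.one_rpow]
        exact le_add_of_nonneg_right (by positivity)
      · exact le_add_of_nonneg_left zero_le_one

lemma one_add_two_div_rpow_le {s a : ℝ} (hs : 0 < s) (ha : 0 ≤ a) :
    (1 + 2 / s) ^ a ≤ 4 ^ a * (1 + s ^ (-a)) := by
  calc (1 + 2 / s) ^ a ≤ (2 * (1 + s⁻¹)) ^ a := by
        refine rpow_le_rpow (by positivity) ?_ ha
        rw [div_eq_mul_inv]
        linarith
    _ = 2 ^ a * (1 + s⁻¹) ^ a := mul_rpow zero_le_two (by positivity)
    _ ≤ 2 ^ a * (2 ^ a * (1 + s⁻¹ ^ a)) := by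
        gcongr
        exact one_add_rpow_le (by positivity) ha
    _ = 4 ^ a * (1 + s ^ (-a)) := by
        rw [← mul_assoc, ← mul_rpow zero_le_two zero_le_two, inv_rpow hs.le, rpow_neg hs.le]
        norm_num

lemma exists_exp_neg_mul_rpow_le_mul_one_add_rpow_neg {c α : ℝ} (hc : 0 < c) (hα : 0 < α) {r : ℝ}
    (hr : 0 ≤ r) : ∃ A : ℝ, ∀ x, 0 ≤ x → exp (-c * x ^ α) ≤ A * (1 + x) ^ (-r) := by
  obtain ⟨N, hN⟩ := exists_nat_ge (r / α)
  rw [div_le_iff₀ hα] at hN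
  refine ⟨2 ^ r * (1 + (1 + N.factorial / c ^ N)), fun x hx => ?_⟩
  have hrpow : x ^ r ≤ 1 + (x ^ α) ^ N := by
    rcases le_total x 1 with h | h
    · exact (rpow_le_one hx h hr).trans (le_add_of_nonneg_right (by positivity))
    · rw [← rpow_mul_natCast hx]
      exact (rpow_le_rpow_of_exponent_le h (by linarith)).trans
        (le_add_of_nonneg_left zero_le_one)
  have hexp : (x ^ α) ^ N ≤ N.factorial / c ^ N * exp (c * x ^ α) := by
    have hfactorial := pow_div_factorial_le_exp (c * x ^ α) (by positivity) N
    rw [mul_pow, div_le_iff₀ (by positivity)] at hfactorial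
    rw [div_mul_eq_mul_div, le_div_iff₀ (by positivity)]
    linarith
  have hone : 1 ≤ exp (c * x ^ α) := one_le_exp (by positivity)
  rw [neg_mul, exp_neg, rpow_neg (by positivity), ← div_eq_mul_inv, inv_eq_one_div,
    div_le_div_iff₀ (by positivity) (by positivity), one_mul]
  calc (1 + x) ^ r ≤ 2 ^ r * (1 + x ^ r) := one_add_rpow_le hx hr
    _ ≤ 2 ^ r * (exp (c * x ^ α) + (exp (c * x ^ α) + N.factorial / c ^ N * exp (c * x ^ α))) := by
      gcongr
      linarith
    _ = 2 ^ r * (1 + (1 + N.factorial / c ^ N)) * exp (c * x ^ α) := by ring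

end RealInequalities

section LatticePoints

lemma setOf_abs_sub_intCast_le_eq_Icc (a r : ℝ) :
    {k : ℤ | |a - k| ≤ r} = Set.Icc ⌈a - r⌉ ⌊a + r⌋ := by
  ext k
  rw [Set.mem_ofPred_eq, Set.mem_Icc, Int.ceil_le, Int.le_floor, abs_sub_le_iff]
  constructor <;> rintro ⟨h₁, h₂⟩ <;> constructor <;> linarith

lemma card_Icc_ceil_floor_le (a : ℝ) {r : ℝ} (hr : 0 ≤ r) :
    ((Finset.Icc ⌈a - r⌉ ⌊a + r⌋).card : ℝ) ≤ 2 * r + 1 := by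
  rw [Int.card_Icc, ← Int.cast_natCast, Int.ofNat_toNat]
  push_cast
  exact max_le (by linarith [Int.floor_le (a + r), Int.le_ceil (a - r)]) (by linarith)

lemma encard_setOf_abs_sub_intCast_le {ι : Type*} [Fintype ι] (a : ι → ℝ) {r : ℝ} (hr : 0 ≤ r) :
    ({k : ι → ℤ | ∀ i, |a i - k i| ≤ r}.encard : ℝ≥0∞) ≤
      ENNReal.ofReal (2 * r + 1) ^ Fintype.card ι := by
  classical
  have hbox : {k : ι → ℤ | ∀ i, |a i - k i| ≤ r} =
      Fintype.piFinset fun i => Finset.Icc ⌈a i - r⌉ ⌊a i + r⌋ := by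
    ext k
    simp only [Fintype.coe_piFinset, Finset.coe_Icc, ← setOf_abs_sub_intCast_le_eq_Icc,
      Set.mem_pi, Set.mem_univ, true_imp_iff, Set.mem_ofPred_eq]
  rw [hbox, Set.encard_coe_eq_coe_finsetCard, Fintype.card_piFinset, ENat.toENNReal_coe,
    Nat.cast_prod]
  refine Finset.prod_le_pow_card _ _ _ fun i _ => ?_
  rw [← ENNReal.ofReal_natCast]
  exact ENNReal.ofReal_le_ofReal (card_Icc_ceil_floor_le (a i) hr)

end LatticePoints

section UnitCube

variable {n : ℕ}

lemma unitCube_eq_preimage_Icc (k : Fin n → ℤ) :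
    unitCube n k = WithLp.ofLp ⁻¹'
      Set.Icc (fun i => (k i : ℝ) - 1 / 2) (fun i => (k i : ℝ) + 1 / 2) := by
  ext x
  simp only [unitCube, Set.mem_ofPred_eq, Set.mem_preimage, Set.mem_Icc, Pi.le_def, ← forall_and]
  refine forall_congr' fun i => ?_
  rw [abs_sub_le_iff]
  constructor <;> rintro ⟨h₁, h₂⟩ <;> constructor <;> linarith

lemma measurableSet_unitCube (k : Fin n → ℤ) : MeasurableSet (unitCube n k) := by
  rw [unitCube_eq_preimage_Icc]
  exact (PiLp.volume_preserving_ofLp (Fin n)).measurable measurableSet_Icc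

lemma volume_unitCube (k : Fin n → ℤ) : volume (unitCube n k) = 1 := by
  rw [unitCube_eq_preimage_Icc, (PiLp.volume_preserving_ofLp (Fin n)).measure_preimage
    measurableSet_Icc.nullMeasurableSet, Real.volume_Icc_pi]
  norm_num

instance isProbabilityMeasure_restrict_unitCube (k : Fin n → ℤ) :
    IsProbabilityMeasure (volume.restrict (unitCube n k)) :=
  ⟨by rw [Measure.restrict_apply_univ, volume_unitCube]⟩

lemma mem_unitCube_round (x : EuclideanSpace ℝ (Fin n)) : x ∈ unitCube n fun i => round (x i) :=
  fun i => abs_sub_round (x i)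

lemma iUnion_unitCube : ⋃ k, unitCube n k = Set.univ :=
  Set.eq_univ_of_forall fun x => Set.mem_iUnion_of_mem _ (mem_unitCube_round x)

lemma pairwise_aedisjoint_unitCube :
    Pairwise (Function.onFun (AEDisjoint volume) (unitCube n)) := by
  intro j k hjk
  obtain ⟨i, hi⟩ := Function.ne_iff.1 hjk
  have hsub : unitCube n j ∩ unitCube n k ⊆
      WithLp.ofLp ⁻¹' {y : Fin n → ℝ | y i = ((j i : ℝ) + k i) / 2} := by
    rintro x ⟨hj, hk⟩
    have h₁ := abs_sub_le_iff.1 (hj i)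
    have h₂ := abs_sub_le_iff.1 (hk i)
    rw [Set.mem_preimage, Set.mem_ofPred_eq]
    rcases lt_or_gt_of_ne hi with h | h
    · have : (j i : ℝ) + 1 ≤ k i := by exact_mod_cast h
      linarith
    · have : (k i : ℝ) + 1 ≤ j i := by exact_mod_cast h
      linarith
  have hnull : volume {y : Fin n → ℝ | y i = ((j i : ℝ) + k i) / 2} = 0 :=
    Measure.pi_hyperplane _ i _
  exact measure_mono_null hsub
    ((PiLp.volume_preserving_ofLp (Fin n)).quasiMeasurePreserving.preimage_null hnull)

lemma tsum_setLIntegral_unitCube (f : EuclideanSpace ℝ (Fin n) → ℝ≥0∞) :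
    ∑' k, ∫⁻ x in unitCube n k, f x = ∫⁻ x, f x := by
  rw [← lintegral_iUnion₀ (fun k => (measurableSet_unitCube k).nullMeasurableSet)
    pairwise_aedisjoint_unitCube, iUnion_unitCube, setLIntegral_univ]

lemma norm_sub_le_sqrt_of_mem_unitCube {k : Fin n → ℤ} {x y : EuclideanSpace ℝ (Fin n)}
    (hx : x ∈ unitCube n k) (hy : y ∈ unitCube n k) : ‖x - y‖ ≤ √n := by
  rw [EuclideanSpace.norm_eq]
  gcongr
  calc ∑ i, ‖(x - y) i‖ ^ 2 ≤ ∑ _i : Fin n, (1 : ℝ) := by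
        refine Finset.sum_le_sum fun i _ => pow_le_one₀ (norm_nonneg _) ?_
        rw [PiLp.sub_apply, norm_eq_abs, ← sub_sub_sub_cancel_right _ _ (k i : ℝ)]
        linarith [abs_sub (x i - k i) (y i - k i), hx i, hy i]
    _ = n := by simp

end UnitCube

section Interpolation

lemma eLpNorm_le_eLpNorm_top_rpow_mul_eLpNorm_one_rpow {Ω F : Type*} [MeasurableSpace Ω]
    {μ : Measure Ω} [NormedAddCommGroup F] {f : Ω → F} (hf : AEStronglyMeasurable f μ)
    {p : ℝ≥0∞} (hp : 1 ≤ p) :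
    eLpNorm f p μ ≤ eLpNorm f ∞ μ ^ (1 - 1 / p.toReal) * eLpNorm f 1 μ ^ (1 / p.toReal) := by
  rcases eq_or_ne p ∞ with rfl | hp_top
  · simp
  have hp₁ : 1 ≤ p.toReal := by simpa using ENNReal.toReal_mono hp_top hp
  have hp₀ : 0 < p.toReal := one_pos.trans_le hp₁
  have hpow : ∫⁻ x, ‖f x‖ₑ ^ p.toReal ∂μ ≤
      eLpNorm f ∞ μ ^ (p.toReal - 1) * ∫⁻ x, ‖f x‖ₑ ∂μ := by
    rw [← lintegral_const_mul'' _ hf.enorm]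
    refine lintegral_mono_ae ?_
    filter_upwards [ae_le_eLpNormEssSup (f := f) (μ := μ)] with x hx
    rw [eLpNorm_exponent_top]
    calc ‖f x‖ₑ ^ p.toReal = ‖f x‖ₑ ^ (p.toReal - 1) * ‖f x‖ₑ := by
          conv_rhs => rw [← ENNReal.rpow_one ‖f x‖ₑ, ← ENNReal.rpow_mul, one_mul,
            ← ENNReal.rpow_add_of_nonneg _ _ (sub_nonneg.2 hp₁) zero_le_one, sub_add_cancel]
      _ ≤ eLpNormEssSup f μ ^ (p.toReal - 1) * ‖f x‖ₑ := by gcongr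
  calc eLpNorm f p μ = (∫⁻ x, ‖f x‖ₑ ^ p.toReal ∂μ) ^ (1 / p.toReal) :=
        eLpNorm_eq_lintegral_rpow_enorm_toReal (one_pos.trans_le hp).ne' hp_top
    _ ≤ (eLpNorm f ∞ μ ^ (p.toReal - 1) * ∫⁻ x, ‖f x‖ₑ ∂μ) ^ (1 / p.toReal) := by gcongr
    _ = eLpNorm f ∞ μ ^ (1 - 1 / p.toReal) * eLpNorm f 1 μ ^ (1 / p.toReal) := by
      rw [ENNReal.mul_rpow_of_nonneg _ _ (by positivity), ← ENNReal.rpow_mul,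
        eLpNorm_one_eq_lintegral_enorm, sub_mul, one_mul, mul_one_div_cancel hp₀.ne']

lemma one_div_toReal_le_one {p : ℝ≥0∞} (hp : 1 ≤ p) : 1 / p.toReal ≤ 1 := by
  rcases eq_or_ne p ∞ with rfl | hp_top
  · simp
  · exact div_le_one_of_le₀ (by simpa using ENNReal.toReal_mono hp_top hp) toReal_nonneg

lemma tsum_rpow_mul_rpow_le {ι : Type*} (a b : ι → ℝ≥0∞) {θ η : ℝ} (hθ : 0 ≤ θ) (hη : 0 ≤ η)
    (hsum : θ + η = 1) :
    ∑' i, a i ^ θ * b i ^ η ≤ (∑' i, a i) ^ θ * (∑' i, b i) ^ η := by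
  let _ : MeasurableSpace ι := ⊤
  have := ENNReal.lintegral_mul_norm_pow_le (μ := Measure.count)
    (measurable_from_top (f := a)).aemeasurable (measurable_from_top (f := b)).aemeasurable
    hθ hη hsum
  simpa only [lintegral_count] using this

end Interpolation

section Amalgam

variable {n : ℕ} {F : Type*} [NormedAddCommGroup F]

/-- The norm of the Wiener amalgam space `ℓ¹(L^p)` on `ℝⁿ`, with values in `[0, ∞]` so that it makes
sense for every function. -/
noncomputable def amalgamNorm (p : ℝ≥0∞) (f : EuclideanSpace ℝ (Fin n) → F) : ℝ≥0∞ :=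
  ∑' k : Fin n → ℤ, eLpNorm f p (volume.restrict (unitCube n k))

lemma amalgamNorm_one (f : EuclideanSpace ℝ (Fin n) → F) :
    amalgamNorm 1 f = ∫⁻ x, ‖f x‖ₑ := by
  simp only [amalgamNorm, eLpNorm_one_eq_lintegral_enorm, tsum_setLIntegral_unitCube]

lemma amalgamNorm_mono_exponent {f : EuclideanSpace ℝ (Fin n) → F}
    (hf : AEStronglyMeasurable f) {p q : ℝ≥0∞} (hpq : p ≤ q) :
    amalgamNorm p f ≤ amalgamNorm q f :=
  ENNReal.tsum_le_tsum fun _ => eLpNorm_le_eLpNorm_of_exponent_le hpq hf.restrict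

lemma amalgamNorm_le_top_rpow_mul_one_rpow {f : EuclideanSpace ℝ (Fin n) → F}
    (hf : AEStronglyMeasurable f) {p : ℝ≥0∞} (hp : 1 ≤ p) :
    amalgamNorm p f ≤
      amalgamNorm ∞ f ^ (1 - 1 / p.toReal) * amalgamNorm 1 f ^ (1 / p.toReal) := by
  calc amalgamNorm p f ≤ ∑' k, eLpNorm f ∞ (volume.restrict (unitCube n k)) ^ (1 - 1 / p.toReal) *
        eLpNorm f 1 (volume.restrict (unitCube n k)) ^ (1 / p.toReal) :=
        ENNReal.tsum_le_tsum fun _ =>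
          eLpNorm_le_eLpNorm_top_rpow_mul_eLpNorm_one_rpow hf.restrict hp
    _ ≤ _ := tsum_rpow_mul_rpow_le _ _ (sub_nonneg.2 (one_div_toReal_le_one hp))
        (by positivity) (sub_add_cancel _ _)

lemma ae_forall_mem_unitCube_enorm_le (f : EuclideanSpace ℝ (Fin n) → F) :
    ∀ᵐ y, ∀ j, y ∈ unitCube n j → ‖f y‖ₑ ≤ eLpNorm f ∞ (volume.restrict (unitCube n j)) :=
  ae_all_iff.2 fun j => (ae_restrict_iff' (measurableSet_unitCube j)).1 ae_le_eLpNormEssSup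

lemma amalgamNorm_top_le_lintegral {f : EuclideanSpace ℝ (Fin n) → F}
    {h : EuclideanSpace ℝ (Fin n) → ℝ≥0∞}
    (hfh : ∀ k, ∀ x ∈ unitCube n k, ∀ y ∈ unitCube n k, ‖f x‖ₑ ≤ h y) :
    amalgamNorm ∞ f ≤ ∫⁻ y, h y := by
  rw [← tsum_setLIntegral_unitCube]
  refine ENNReal.tsum_le_tsum fun k => ?_
  have hsup : ∀ y ∈ unitCube n k, eLpNorm f ∞ (volume.restrict (unitCube n k)) ≤ h y :=
    fun y hy => eLpNormEssSup_le_of_ae_enorm_bound <|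
      (ae_restrict_iff' (measurableSet_unitCube k)).2 <| .of_forall fun x hx => hfh k x hx y hy
  calc eLpNorm f ∞ (volume.restrict (unitCube n k))
      = ∫⁻ _ in unitCube n k, eLpNorm f ∞ (volume.restrict (unitCube n k)) := by
        rw [setLIntegral_const, volume_unitCube, mul_one]
    _ ≤ ∫⁻ y in unitCube n k, h y := setLIntegral_mono' (measurableSet_unitCube k) hsup

lemma amalgamNorm_top_lt_top_of_norm_le {f : EuclideanSpace ℝ (Fin n) → F} {A r : ℝ}
    (hr : n < r) (hf : ∀ x, ‖f x‖ ≤ A * (1 + ‖x‖) ^ (-r)) : amalgamNorm ∞ f < ∞ := by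
  have hr₀ : 0 ≤ r := n.cast_nonneg.trans hr.le
  have hA : 0 ≤ A := by simpa using (norm_nonneg _).trans (hf 0)
  have hcube : ∀ k, ∀ x ∈ unitCube n k, ∀ y ∈ unitCube n k,
      ‖f x‖ₑ ≤ ENNReal.ofReal (A * (1 + √n) ^ r) * ENNReal.ofReal ((1 + ‖y‖) ^ (-r)) := by
    intro k x hx y hy
    have hxy : 1 + ‖y‖ ≤ (1 + √n) * (1 + ‖x‖) := by
      nlinarith [norm_le_norm_add_norm_sub' y x, norm_sub_le_sqrt_of_mem_unitCube hy hx,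
        mul_nonneg (sqrt_nonneg n) (norm_nonneg x)]
    rw [← ENNReal.ofReal_mul (by positivity), ← ofReal_norm]
    refine ENNReal.ofReal_le_ofReal ((hf x).trans ?_)
    rw [mul_assoc]
    refine mul_le_mul_of_nonneg_left ?_ hA
    rw [rpow_neg (by positivity), rpow_neg (by positivity), ← div_eq_mul_inv, inv_eq_one_div,
      div_le_div_iff₀ (by positivity) (by positivity), one_mul, ← mul_rpow (by positivity)
      (by positivity)]
    exact rpow_le_rpow (by positivity) hxy hr₀
  calc amalgamNorm ∞ f ≤ ∫⁻ y, _ := amalgamNorm_top_le_lintegral hcube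
    _ = ENNReal.ofReal (A * (1 + √n) ^ r) *
        ∫⁻ y : EuclideanSpace ℝ (Fin n), ENNReal.ofReal ((1 + ‖y‖) ^ (-r)) :=
      lintegral_const_mul' _ _ ENNReal.ofReal_ne_top
    _ < ∞ := ENNReal.mul_lt_top ENNReal.ofReal_lt_top
      (finite_integral_one_add_norm (by simpa using hr))

lemma amalgamNorm_top_exp_neg_mul_norm_rpow_lt_top {c α : ℝ} (hc : 0 < c) (hα : 0 < α) :
    amalgamNorm ∞ (fun x : EuclideanSpace ℝ (Fin n) => exp (-c * ‖x‖ ^ α)) < ∞ := by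
  obtain ⟨A, hA⟩ := exists_exp_neg_mul_rpow_le_mul_one_add_rpow_neg hc hα
    (r := n + 1) (by positivity)
  refine amalgamNorm_top_lt_top_of_norm_le (A := A) (lt_add_one (n : ℝ)) fun x => ?_
  rw [norm_of_nonneg (exp_nonneg _)]
  exact hA ‖x‖ (norm_nonneg x)

end Amalgam

section Dilation

variable {n : ℕ} {F : Type*} [NormedAddCommGroup F] {s : ℝ}

lemma abs_mul_sub_le_of_mem_unitCube (hs : 0 < s) {j k : Fin n → ℤ}
    {x : EuclideanSpace ℝ (Fin n)} (hx : x ∈ unitCube n k) (hj : s⁻¹ • x ∈ unitCube n j)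
    (i : Fin n) : |s * j i - k i| ≤ (s + 1) / 2 := by
  have hscaled : |s * j i - x i| ≤ s / 2 := by
    have heq : s * j i - x i = -(s * ((s⁻¹ • x) i - j i)) := by
      rw [PiLp.smul_apply, smul_eq_mul]
      field_simp
      ring
    rw [heq, abs_neg, abs_mul, abs_of_pos hs]
    linarith [mul_le_mul_of_nonneg_left (hj i) hs.le]
  linarith [abs_sub_le (s * j i) (x i) (k i), hx i]

lemma eLpNorm_top_comp_inv_smul_unitCube_le (hs : 0 < s) (f : EuclideanSpace ℝ (Fin n) → F)
    (k : Fin n → ℤ) :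
    eLpNorm (fun x => f (s⁻¹ • x)) ∞ (volume.restrict (unitCube n k)) ≤
      ∑' j, {k : Fin n → ℤ | ∀ i, |s * j i - k i| ≤ (s + 1) / 2}.indicator
        (fun _ => eLpNorm f ∞ (volume.restrict (unitCube n j))) k := by
  refine eLpNormEssSup_le_of_ae_enorm_bound ((ae_restrict_iff' (measurableSet_unitCube k)).2 ?_)
  filter_upwards [(Measure.quasiMeasurePreserving_smul volume (inv_pos.2 hs).ne').ae
    (ae_forall_mem_unitCube_enorm_le f)] with x hx hxk
  have hmem := mem_unitCube_round (s⁻¹ • x)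
  refine (hx _ hmem).trans (le_trans ?_ (ENNReal.le_tsum fun i => round ((s⁻¹ • x) i)))
  rw [Set.indicator_of_mem]
  exact abs_mul_sub_le_of_mem_unitCube hs hxk hmem

lemma amalgamNorm_top_comp_inv_smul_le (hs : 0 < s) (f : EuclideanSpace ℝ (Fin n) → F) :
    amalgamNorm ∞ (fun x => f (s⁻¹ • x)) ≤ ENNReal.ofReal (s + 2) ^ n * amalgamNorm ∞ f := by
  rw [amalgamNorm, amalgamNorm, ← ENNReal.tsum_mul_left]
  refine (ENNReal.tsum_le_tsum (eLpNorm_top_comp_inv_smul_unitCube_le hs f)).trans ?_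
  rw [ENNReal.tsum_comm]
  refine ENNReal.tsum_le_tsum fun j => ?_
  rw [← tsum_subtype, ENNReal.tsum_set_const]
  gcongr
  refine (encard_setOf_abs_sub_intCast_le (fun i => s * j i) (by positivity)).trans_eq ?_
  rw [Fintype.card_fin]
  ring_nf

lemma amalgamNorm_one_comp_inv_smul (hs : 0 < s) (f : EuclideanSpace ℝ (Fin n) → F) :
    amalgamNorm 1 (fun x => f (s⁻¹ • x)) = ENNReal.ofReal s ^ n * amalgamNorm 1 f := by
  have hs' : s⁻¹ ≠ 0 := (inv_pos.2 hs).ne'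
  rw [amalgamNorm_one, amalgamNorm_one]
  calc ∫⁻ x, ‖f (s⁻¹ • x)‖ₑ = ∫⁻ x, ‖f x‖ₑ ∂volume.map (s⁻¹ • ·) :=
        ((Homeomorph.smulOfNeZero s⁻¹ hs').measurableEmbedding.lintegral_map
          (fun x => ‖f x‖ₑ)).symm
    _ = ENNReal.ofReal s ^ n * ∫⁻ x, ‖f x‖ₑ := by
        rw [Measure.map_addHaar_smul volume hs', lintegral_smul_measure,
          finrank_euclideanSpace_fin, inv_pow, inv_inv, abs_of_pos (by positivity),
          ENNReal.ofReal_pow hs.le, smul_eq_mul]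

variable [NormedSpace ℝ F]

/-- The dilation of `f` to the length scale `s`, normalized so as to preserve the `L¹` norm. -/
noncomputable def dilation (s : ℝ) (f : EuclideanSpace ℝ (Fin n) → F) :
    EuclideanSpace ℝ (Fin n) → F :=
  (s ^ n)⁻¹ • fun x => f (s⁻¹ • x)

lemma aestronglyMeasurable_dilation (hs : 0 < s) {f : EuclideanSpace ℝ (Fin n) → F}
    (hf : AEStronglyMeasurable f) : AEStronglyMeasurable (dilation s f) :=
  (hf.comp_quasiMeasurePreserving
    (Measure.quasiMeasurePreserving_smul volume (inv_pos.2 hs).ne')).const_smul _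

lemma amalgamNorm_dilation (hs : 0 < s) (p : ℝ≥0∞) (f : EuclideanSpace ℝ (Fin n) → F) :
    amalgamNorm p (dilation s f) =
      (ENNReal.ofReal s ^ n)⁻¹ * amalgamNorm p (fun x => f (s⁻¹ • x)) := by
  simp only [amalgamNorm, dilation, eLpNorm_const_smul, ENNReal.tsum_mul_left]
  rw [Real.enorm_eq_ofReal (by positivity), ENNReal.ofReal_inv_of_pos (by positivity),
    ENNReal.ofReal_pow hs.le]

lemma amalgamNorm_one_dilation (hs : 0 < s) (f : EuclideanSpace ℝ (Fin n) → F) :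
    amalgamNorm 1 (dilation s f) = amalgamNorm 1 f := by
  rw [amalgamNorm_dilation hs, amalgamNorm_one_comp_inv_smul hs]
  exact ENNReal.inv_mul_cancel_left (by simp [hs]) (by simp)

lemma amalgamNorm_top_dilation_le (hs : 0 < s) (f : EuclideanSpace ℝ (Fin n) → F) :
    amalgamNorm ∞ (dilation s f) ≤ ENNReal.ofReal (1 + 2 / s) ^ n * amalgamNorm ∞ f := by
  have hscale : 1 + 2 / s = s⁻¹ * (s + 2) := by
    field_simp
  rw [amalgamNorm_dilation hs, hscale, ENNReal.ofReal_mul (by positivity),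
    ENNReal.ofReal_inv_of_pos hs, mul_pow, ENNReal.inv_pow, mul_assoc]
  gcongr
  exact amalgamNorm_top_comp_inv_smul_le hs f

lemma amalgamNorm_dilation_le (hs : 0 < s) {f : EuclideanSpace ℝ (Fin n) → F}
    (hf : AEStronglyMeasurable f) {p : ℝ≥0∞} (hp : 1 ≤ p) :
    amalgamNorm p (dilation s f) ≤
      ENNReal.ofReal ((1 + 2 / s) ^ (n * (1 - 1 / p.toReal))) * amalgamNorm ∞ f := by
  have hθ : 0 ≤ 1 - 1 / p.toReal := sub_nonneg.2 (one_div_toReal_le_one hp)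
  have hη : 0 ≤ 1 / p.toReal := by positivity
  calc amalgamNorm p (dilation s f)
      ≤ amalgamNorm ∞ (dilation s f) ^ (1 - 1 / p.toReal) *
          amalgamNorm 1 (dilation s f) ^ (1 / p.toReal) :=
        amalgamNorm_le_top_rpow_mul_one_rpow (aestronglyMeasurable_dilation hs hf) hp
    _ ≤ (ENNReal.ofReal (1 + 2 / s) ^ n * amalgamNorm ∞ f) ^ (1 - 1 / p.toReal) *
          amalgamNorm ∞ f ^ (1 / p.toReal) := by
        gcongr
        · exact amalgamNorm_top_dilation_le hs f
        · rw [amalgamNorm_one_dilation hs]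
          exact amalgamNorm_mono_exponent hf le_top
    _ = ENNReal.ofReal ((1 + 2 / s) ^ (n * (1 - 1 / p.toReal))) * amalgamNorm ∞ f := by
        rw [ENNReal.mul_rpow_of_nonneg _ _ hθ, mul_assoc, ← ENNReal.rpow_add_of_nonneg _ _ hθ hη,
          sub_add_cancel, ENNReal.rpow_one, ← ENNReal.rpow_natCast, ← ENNReal.rpow_mul,
          ENNReal.ofReal_rpow_of_pos (by positivity)]

theorem exists_amalgamNorm_dilation_le {f : EuclideanSpace ℝ (Fin n) → F}
    (hf : AEStronglyMeasurable f) (hf_top : amalgamNorm ∞ f < ∞) {p : ℝ≥0∞} (hp : 1 ≤ p) :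
    ∃ C > (0 : ℝ), ∀ s, 0 < s → amalgamNorm p (dilation s f) ≤
      ENNReal.ofReal (C * (1 + s ^ (-(n * (1 - 1 / p.toReal))))) := by
  have ha : 0 ≤ n * (1 - 1 / p.toReal) :=
    mul_nonneg n.cast_nonneg (sub_nonneg.2 (one_div_toReal_le_one hp))
  set a := n * (1 - 1 / p.toReal)
  set W := (amalgamNorm ∞ f).toReal
  refine ⟨4 ^ a * (W + 1), by positivity, fun s hs => ?_⟩
  calc amalgamNorm p (dilation s f)
      ≤ ENNReal.ofReal ((1 + 2 / s) ^ a) * ENNReal.ofReal W := by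
        rw [ENNReal.ofReal_toReal hf_top.ne]
        exact amalgamNorm_dilation_le hs hf hp
    _ = ENNReal.ofReal ((1 + 2 / s) ^ a * W) := (ENNReal.ofReal_mul (by positivity)).symm
    _ ≤ ENNReal.ofReal (4 ^ a * (W + 1) * (1 + s ^ (-a))) := by
        rw [mul_right_comm]
        gcongr
        · exact one_add_two_div_rpow_le hs ha
        · exact le_add_of_nonneg_right zero_le_one

end Dilation

lemma Gprof_eq_dilation {n m : ℕ} (hm : 1 ≤ m) (c : ℝ) {t : ℝ} (ht : 0 < t) :
    Gprof n m c t = dilation (t ^ (1 / (2 * m : ℝ)))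
      (fun x : EuclideanSpace ℝ (Fin n) => exp (-c * ‖x‖ ^ (2 * m / (2 * m - 1) : ℝ))) := by
  have hm' : (1 : ℝ) ≤ m := by exact_mod_cast hm
  have hsub : (2 * m - 1 : ℝ) ≠ 0 := by linarith
  have hs : 0 ≤ t ^ (1 / (2 * m : ℝ)) := by positivity
  have hprefactor : t ^ (-(n : ℝ) / (2 * m)) = ((t ^ (1 / (2 * m : ℝ))) ^ n)⁻¹ := by
    rw [← rpow_mul_natCast ht.le, ← rpow_neg ht.le]
    ring_nf
  have hscale : t ^ (1 / (2 * m - 1) : ℝ) =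
      (t ^ (1 / (2 * m : ℝ))) ^ (2 * m / (2 * m - 1) : ℝ) := by
    rw [← rpow_mul ht.le]
    congr 1
    field_simp
  funext x
  rw [Gprof, hprefactor, hscale, mul_div_assoc, ← div_rpow (norm_nonneg x) hs, dilation,
    Pi.smul_apply, smul_eq_mul, norm_smul, norm_inv, norm_of_nonneg hs, div_eq_inv_mul ‖x‖]

/-- for `1 ≤ p ≤ ∞` and `c > 0` there is `C > 0`, depending only on `n`, `m`, `c`
and `p`, such that for every `t > 0`,
`Σ_{k∈ℤⁿ} ‖G_t‖_{L^p(C(k))} ≤ C (1 + t^{-(n/(2m))(1-1/p)})`.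
(When `p = ∞`, `1 - 1/p.toReal = 1` by the Lean conventions `(∞).toReal = 0`, `1/0 = 0`.) -/
theorem gaussian_amalgam_bound (n m : ℕ) (hn : 1 ≤ n) (hm : 1 ≤ m) (c : ℝ) (hc : 0 < c)
    (p : ℝ≥0∞) (hp : 1 ≤ p) :
    ∃ C > (0 : ℝ), ∀ t : ℝ, 0 < t →
      Summable (fun k : Fin n → ℤ =>
        (eLpNorm (fun x => Gprof n m c t x) p (volume.restrict (unitCube n k))).toReal) ∧
      ∑' k : Fin n → ℤ,
          (eLpNorm (fun x => Gprof n m c t x) p (volume.restrict (unitCube n k))).toReal ≤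
        C * (1 + t ^ (-((n : ℝ) / (2 * (m : ℝ))) * (1 - 1 / p.toReal))) := by
  have hm' : (1 : ℝ) ≤ m := by exact_mod_cast hm
  have hα : (0 : ℝ) < 2 * m / (2 * m - 1) := div_pos (by linarith) (by linarith)
  have hmeas : Measurable fun x : EuclideanSpace ℝ (Fin n) =>
    exp (-c * ‖x‖ ^ (2 * m / (2 * m - 1) : ℝ)) := by fun_prop
  obtain ⟨C, hC, hdilation⟩ := exists_amalgamNorm_dilation_le hmeas.aestronglyMeasurable
    (amalgamNorm_top_exp_neg_mul_norm_rpow_lt_top hc hα) hp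
  refine ⟨C, hC, fun t ht => ?_⟩
  have hexponent : (t ^ (1 / (2 * m : ℝ))) ^ (-(n * (1 - 1 / p.toReal))) =
      t ^ (-((n : ℝ) / (2 * m)) * (1 - 1 / p.toReal)) := by
    rw [← rpow_mul ht.le]
    ring_nf
  have hbound : amalgamNorm p (Gprof n m c t) ≤
      ENNReal.ofReal (C * (1 + t ^ (-((n : ℝ) / (2 * m)) * (1 - 1 / p.toReal)))) := by
    rw [Gprof_eq_dilation hm c ht, ← hexponent]
    exact hdilation _ (rpow_pos_of_pos ht _)
  have hfinite : amalgamNorm p (Gprof n m c t) ≠ ∞ := ne_top_of_le_ne_top ofReal_ne_top hbound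
  refine ⟨ENNReal.summable_toReal hfinite, ?_⟩
  rw [← ENNReal.tsum_toReal_eq (ENNReal.ne_top_of_tsum_ne_top hfinite)]
  exact ENNReal.toReal_le_of_le_ofReal (by positivity) hbound
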